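/- arXiv:2012.11493 — 3 statements merged into one kernel-verified Lean document; each statement's English description precedes it below -/
import Mathlib

section
/- Let α ∈ (−1,1) and a ≥ 0 be real. Suppose that for each nonnegative integer k, (R_{k,l})_{l≥0} is a sequence of real polynomials with deg R_{k,l} = l and ∫_α^1 R_{k,l}(z) p(z) (z−α)^a (1−z²)^k dz = 0 for every polynomial p with deg p < l. Define Q_{n,k,i}(θ,z) := R_{k,n−k}(z) · (1−z²)^{k/2} · Y_{k,i}(θ). Then for index triples (n,k,i) and (m,j,h) (with 0 ≤ k ≤ n, 0 ≤ j ≤ m and admissible i, h), if h ≠ 1 − i, or j ∉ {k−1, k+1}, or |m − n| ≥ 2, one has ∫_α^1 ∫_0^{2π} √(1−z²) sin θ · Q_{n,k,i}(θ,z) · Q_{m,j,h}(θ,z) · (z−α)^a dθ dz = 0. (This is the sparsity of the Jacobi operator for multiplication by y = ρ(z) sin θ on the spherical cap.) -/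
open MeasureTheory Real Polynomial

/-- The circular harmonics: `Y 0 _ θ = √2/2`, `Y k 0 θ = cos (k θ)`, `Y k 1 θ = sin (k θ)`. -/
noncomputable def circY (k i : ℕ) (θ : ℝ) : ℝ :=
  if k = 0 then Real.sqrt 2 / 2
  else if i = 0 then Real.cos (k * θ) else Real.sin (k * θ)

/- Write `x = 1 - z²`. The integral factors into an angular and a radial part. The angular part
`∫ sin θ · Y_{k,i} · Y_{j,h}` has an odd integrand under `θ ↦ 2π - θ` if `h = i`, and otherwise is a
combination of integrals of `cos (q θ)` with `q = j ± 1 ± k`, all nonzero unless `j = k ± 1`.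
If `j = k + 1` (the other case is symmetric), the powers of `√x` in the radial part combine to
`x ^ (k + 1)`. This factor belongs to the weight of `R_{k+1}`, and it is also `x` times the factor
`x ^ k` in the weight of `R_k`. So the radial integral vanishes when `deg R_{k,n-k} < m - j` or
`deg (x · R_{j,m-j}) < n - k`; since `x` has degree `2`, these cover `|m - n| ≥ 2`. -/

theorem circY_zero_right (k : ℕ) (θ : ℝ) : circY k 0 θ = circY k 0 0 * cos (k * θ) := by
  by_cases hk : k = 0 <;> simp [circY, hk]

theorem circY_one_right {k : ℕ} (hk : k ≠ 0) (θ : ℝ) : circY k 1 θ = sin (k * θ) := by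
  simp [circY, hk]

theorem circY_two_pi_sub {k i : ℕ} (hi : i ≤ 1) (hi0 : k = 0 → i = 0) (θ : ℝ) :
    circY k i (2 * π - θ) = (-1) ^ i * circY k i θ := by
  rcases Nat.le_one_iff_eq_zero_or_eq_one.1 hi with rfl | rfl
  · rw [circY_zero_right, circY_zero_right k θ, mul_sub, cos_nat_mul_two_pi_sub, pow_zero, one_mul]
  · have hk : k ≠ 0 := fun hk ↦ one_ne_zero (hi0 hk)
    rw [circY_one_right hk, circY_one_right hk, mul_sub, sin_nat_mul_two_pi_sub, pow_one,
      neg_one_mul]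

theorem integral_eq_zero_of_comp_sub_eq_neg {f : ℝ → ℝ} {c : ℝ} (hf : ∀ x, f (c - x) = -f x) :
    ∫ x in 0..c, f x = 0 := by
  have hreflect := intervalIntegral.integral_comp_sub_left (a := 0) (b := c) f c
  simp only [hf, intervalIntegral.integral_neg, sub_self, sub_zero] at hreflect
  linarith

theorem integral_cos_int_mul_eq_zero {q : ℤ} (hq : q ≠ 0) :
    ∫ θ in 0..2 * π, cos (q * θ) = 0 := by
  have hsin : sin (q * (2 * π)) = 0 := by
    simpa [mul_assoc] using sin_int_mul_pi (q * 2)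
  rw [intervalIntegral.integral_comp_mul_left cos (Int.cast_ne_zero.2 hq), integral_cos, hsin,
    mul_zero, sin_zero, sub_zero, smul_zero]

theorem integral_cos_mul_cos_eq_zero {p q : ℤ} (hsub : p ≠ q) (hadd : p ≠ -q) :
    ∫ θ in 0..2 * π, cos (p * θ) * cos (q * θ) = 0 := by
  have hprod (θ : ℝ) : cos (p * θ) * cos (q * θ) =
      2⁻¹ * (cos ((p - q : ℤ) * θ) + cos ((p + q : ℤ) * θ)) := by
    push_cast
    rw [sub_mul, add_mul, cos_sub, cos_add]
    ring
  have hintegrable (r : ℤ) : IntervalIntegrable (fun θ ↦ cos (r * θ)) volume 0 (2 * π) :=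
    Continuous.intervalIntegrable (by fun_prop) _ _
  simp only [hprod]
  rw [intervalIntegral.integral_const_mul,
    intervalIntegral.integral_add (hintegrable _) (hintegrable _),
    integral_cos_int_mul_eq_zero (by omega), integral_cos_int_mul_eq_zero (by omega), add_zero,
    mul_zero]

theorem integral_sin_mul_cos_mul_sin_eq_zero {k j : ℕ} (hjk : j ≠ k + 1) (hkj : k ≠ j + 1) :
    ∫ θ in 0..2 * π, sin θ * cos (k * θ) * sin (j * θ) = 0 := by
  have hprod (θ : ℝ) : sin θ * cos (k * θ) * sin (j * θ) =
      2⁻¹ * (cos ((j - 1 : ℤ) * θ) * cos ((k : ℤ) * θ) -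
        cos ((j + 1 : ℤ) * θ) * cos ((k : ℤ) * θ)) := by
    push_cast
    rw [sub_mul, add_mul, one_mul, cos_sub, cos_add]
    ring
  have hintegrable (p q : ℤ) :
      IntervalIntegrable (fun θ ↦ cos (p * θ) * cos (q * θ)) volume 0 (2 * π) :=
    Continuous.intervalIntegrable (by fun_prop) _ _
  simp only [hprod]
  rw [intervalIntegral.integral_const_mul,
    intervalIntegral.integral_sub (hintegrable _ _) (hintegrable _ _),
    integral_cos_mul_cos_eq_zero (by omega) (by omega),
    integral_cos_mul_cos_eq_zero (by omega) (by omega), sub_zero, mul_zero]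

theorem integral_sin_mul_circY_mul_circY_same_eq_zero {k j i : ℕ} (hi : i ≤ 1)
    (hk : k = 0 → i = 0) (hj : j = 0 → i = 0) :
    ∫ θ in 0..2 * π, sin θ * circY k i θ * circY j i θ = 0 := by
  refine integral_eq_zero_of_comp_sub_eq_neg fun θ ↦ ?_
  have hsign : ((-1 : ℝ) ^ i) * (-1) ^ i = 1 := by rw [← mul_pow, neg_one_mul, neg_neg, one_pow]
  rw [sin_two_pi_sub, circY_two_pi_sub hi hk, circY_two_pi_sub hi hj]
  linear_combination (-(sin θ * circY k i θ * circY j i θ)) * hsign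

theorem integral_sin_mul_circY_zero_mul_circY_one_eq_zero {k j : ℕ} (hj : j ≠ 0)
    (hjk : j ≠ k + 1) (hkj : k ≠ j + 1) :
    ∫ θ in 0..2 * π, sin θ * circY k 0 θ * circY j 1 θ = 0 := by
  calc ∫ θ in 0..2 * π, sin θ * circY k 0 θ * circY j 1 θ
      = ∫ θ in 0..2 * π, circY k 0 0 * (sin θ * cos (k * θ) * sin (j * θ)) := by
        congr 1
        ext θ
        rw [circY_zero_right, circY_one_right hj]
        ring
    _ = 0 := by
        rw [intervalIntegral.integral_const_mul, integral_sin_mul_cos_mul_sin_eq_zero hjk hkj,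
          mul_zero]

theorem integral_sin_mul_circY_mul_circY_eq_zero {k i j h : ℕ}
    (hi : i ≤ 1) (hi0 : k = 0 → i = 0) (hh : h ≤ 1) (hh0 : j = 0 → h = 0)
    (hcond : h ≠ 1 - i ∨ (j ≠ k + 1 ∧ k ≠ j + 1)) :
    ∫ θ in 0..2 * π, sin θ * circY k i θ * circY j h θ = 0 := by
  by_cases hih : h = i
  · subst hih
    exact integral_sin_mul_circY_mul_circY_same_eq_zero hi hi0 hh0
  · obtain ⟨hjk, hkj⟩ := hcond.resolve_left (by omega)
    obtain ⟨rfl, rfl⟩ | ⟨rfl, rfl⟩ : i = 0 ∧ h = 1 ∨ i = 1 ∧ h = 0 := by omega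
    · exact integral_sin_mul_circY_zero_mul_circY_one_eq_zero (by omega) hjk hkj
    · simpa only [mul_right_comm] using
        integral_sin_mul_circY_zero_mul_circY_one_eq_zero (k := j) (j := k) (by omega) hkj hjk

/-- The polynomial `q` is orthogonal, with respect to the weight `v` on the interval from `α` to
`β`, to all polynomials of degree less than `l`. -/
def OrthogonalBelow (α β : ℝ) (v : ℝ → ℝ) (l : ℕ) (q : ℝ[X]) : Prop :=
  ∀ p : ℝ[X], p.degree < l → ∫ x in α..β, q.eval x * p.eval x * v x = 0

theorem OrthogonalBelow.integral_mul_eq_zero {α β : ℝ} {v : ℝ → ℝ} {r s : ℕ} {p q c : ℝ[X]}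
    (hp : OrthogonalBelow α β v r p) (hq : OrthogonalBelow α β (fun x ↦ v x * c.eval x) s q)
    (hdeg : p.degree < s ∨ (q * c).degree < r) :
    ∫ x in α..β, p.eval x * q.eval x * (v x * c.eval x) = 0 := by
  rcases hdeg with hps | hqr
  · simpa only [mul_comm (eval _ p)] using hq p hps
  · rw [← hp (q * c) hqr]
    congr 1
    ext x
    rw [eval_mul]
    ring

/-- The polynomials `R k l` of degree at most `l` are the radial factors of an orthogonal family on
the zone `α ≤ z ≤ β` of the sphere with zonal weight `w`: for each `k`, the sequence `R k` is
orthogonal for the weight `w z * (1 - z²) ^ k`. Integrability of `w` makes every integral in the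
orthogonality relations converge, so that none of them vanishes as a junk value. -/
structure IsZonalFamily (α β : ℝ) (w : ℝ → ℝ) (R : ℕ → ℕ → ℝ[X]) : Prop where
  weight_intervalIntegrable : IntervalIntegrable w volume α β
  degree_le : ∀ k l, (R k l).degree ≤ l
  orthogonalBelow : ∀ k l, OrthogonalBelow α β (fun x ↦ w x * (1 - x ^ 2) ^ k) l (R k l)

/-- The radial factor `R_{k,n-k}(z) ρ(z)^k` of `Q_{n,k,i}`. -/
noncomputable def zonalRadial (R : ℕ → ℕ → ℝ[X]) (n k : ℕ) (z : ℝ) : ℝ :=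
  (R k (n - k)).eval z * (1 - z ^ 2) ^ ((k : ℝ) / 2)

/-- The basis function `Q_{n,k,i}(θ, z)` of total degree `n`; the index `n - k` of the radial
polynomial is only meaningful for `k ≤ n`. -/
noncomputable def zonalQ (R : ℕ → ℕ → ℝ[X]) (n k i : ℕ) (θ z : ℝ) : ℝ :=
  zonalRadial R n k z * circY k i θ

theorem sqrt_mul_rpow_half_mul_rpow_half_succ {x : ℝ} (hx : 0 ≤ x) (k : ℕ) :
    √x * x ^ ((k : ℝ) / 2) * x ^ (((k + 1 : ℕ) : ℝ) / 2) = x ^ (k + 1) := by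
  have hpow (l : ℕ) : x ^ ((l : ℝ) / 2) = √x ^ l := by
    rw [sqrt_eq_rpow, ← rpow_mul_natCast hx, one_div_mul_eq_div]
  rw [hpow, hpow, ← pow_succ', ← mul_pow, mul_self_sqrt hx]

theorem IsZonalFamily.integral_eval_mul_eval_succ_eq_zero {α β : ℝ} {w : ℝ → ℝ}
    {R : ℕ → ℕ → ℝ[X]} (hR : IsZonalFamily α β w R) {k r s : ℕ} (hrs : r < s ∨ s + 2 < r) :
    ∫ z in α..β, (R k r).eval z * (R (k + 1) s).eval z * (w z * (1 - z ^ 2) ^ (k + 1)) = 0 := by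
  have hweight (z : ℝ) : w z * (1 - z ^ 2) ^ (k + 1) =
      w z * (1 - z ^ 2) ^ k * (1 - X ^ 2 : ℝ[X]).eval z := by
    rw [eval_sub, eval_one, eval_pow, eval_X, pow_succ, mul_assoc]
  have hsucc := hR.orthogonalBelow (k + 1) s
  simp only [hweight] at hsucc ⊢
  refine (hR.orthogonalBelow k r).integral_mul_eq_zero hsucc (hrs.imp (fun hlt ↦ ?_) fun hlt ↦ ?_)
  · exact (hR.degree_le k r).trans_lt (by exact_mod_cast hlt)
  · have hquad : (1 - X ^ 2 : ℝ[X]).degree ≤ 2 := by compute_degree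
    calc (R (k + 1) s * (1 - X ^ 2)).degree
        ≤ (s : WithBot ℕ) + 2 := degree_mul_le_of_le (hR.degree_le _ _) hquad
      _ < r := by exact_mod_cast hlt

theorem IsZonalFamily.integral_radial_mul_radial_succ_eq_zero {α β : ℝ}
    (hαβ : Set.uIcc α β ⊆ Set.Icc (-1) 1) {w : ℝ → ℝ} {R : ℕ → ℕ → ℝ[X]}
    (hR : IsZonalFamily α β w R) {n k m : ℕ} (hkn : k ≤ n) (hkm : k + 1 ≤ m)
    (hmn : 2 ≤ |(m : ℤ) - n|) :
    ∫ z in α..β, √(1 - z ^ 2) * zonalRadial R n k z * zonalRadial R m (k + 1) z * w z = 0 := by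
  rw [← hR.integral_eval_mul_eval_succ_eq_zero (k := k) (r := n - k) (s := m - (k + 1))
    (by rcases le_abs.1 hmn with hlt | hgt <;> omega)]
  refine intervalIntegral.integral_congr fun z hz ↦ ?_
  have hnonneg : 0 ≤ 1 - z ^ 2 := sub_nonneg.2 ((sq_le_one_iff_abs_le_one z).2 (abs_le.2 (hαβ hz)))
  simp only [zonalRadial, ← sqrt_mul_rpow_half_mul_rpow_half_succ hnonneg k]
  ring

theorem integral_coupling_eq_mul (α β : ℝ) (w : ℝ → ℝ) (R : ℕ → ℕ → ℝ[X]) (n k i m j h : ℕ) :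
    ∫ z in α..β, ∫ θ in 0..2 * π,
      √(1 - z ^ 2) * sin θ * zonalQ R n k i θ z * zonalQ R m j h θ z * w z =
    (∫ z in α..β, √(1 - z ^ 2) * zonalRadial R n k z * zonalRadial R m j z * w z) *
      ∫ θ in 0..2 * π, sin θ * circY k i θ * circY j h θ := by
  rw [← intervalIntegral.integral_mul_const]
  congr 1
  ext z
  rw [← intervalIntegral.integral_const_mul]
  congr 1
  ext θ
  rw [zonalQ, zonalQ]
  ring

theorem sphericalCap_jacobiY_sparse_general {α β : ℝ} (hαβ : Set.uIcc α β ⊆ Set.Icc (-1) 1)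
    {w : ℝ → ℝ} {R : ℕ → ℕ → ℝ[X]} (hR : IsZonalFamily α β w R)
    {n k i m j h : ℕ} (hkn : k ≤ n) (hjm : j ≤ m)
    (hi : i ≤ 1) (hi0 : k = 0 → i = 0) (hh : h ≤ 1) (hh0 : j = 0 → h = 0)
    (hcond : h ≠ 1 - i ∨ ((j : ℤ) ≠ k - 1 ∧ (j : ℤ) ≠ k + 1) ∨ 2 ≤ |(m : ℤ) - n|) :
    ∫ z in α..β, ∫ θ in 0..2 * π,
      √(1 - z ^ 2) * sin θ * zonalQ R n k i θ z * zonalQ R m j h θ z * w z = 0 := by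
  rw [integral_coupling_eq_mul]
  by_cases hang : h ≠ 1 - i ∨ (j ≠ k + 1 ∧ k ≠ j + 1)
  · rw [integral_sin_mul_circY_mul_circY_eq_zero hi hi0 hh hh0 hang, mul_zero]
  · have hmn : 2 ≤ |(m : ℤ) - n| := by omega
    refine mul_eq_zero_of_left ?_ _
    obtain rfl | rfl : j = k + 1 ∨ k = j + 1 := by omega
    · exact hR.integral_radial_mul_radial_succ_eq_zero hαβ hkn hjm hmn
    · simpa only [mul_right_comm] using
        hR.integral_radial_mul_radial_succ_eq_zero hαβ hjm hkn (abs_sub_comm (m : ℤ) n ▸ hmn)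

theorem isZonalFamily_cap {α a : ℝ} (ha : -1 < a) {R : ℕ → ℕ → ℝ[X]}
    (hdeg : ∀ k l : ℕ, (R k l).degree ≤ l)
    (horth : ∀ (k l : ℕ) (p : ℝ[X]), p.degree < l →
      ∫ x in α..1, (R k l).eval x * p.eval x * (x - α) ^ a * (1 - x ^ 2) ^ k = 0) :
    IsZonalFamily α 1 (fun z ↦ (z - α) ^ a) R where
  weight_intervalIntegrable := by
    simpa only [zero_add, sub_add_cancel] using
      (intervalIntegral.intervalIntegrable_rpow' (a := 0) (b := 1 - α) ha).comp_sub_right α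
  degree_le := hdeg
  orthogonalBelow k l p hp := by simpa only [mul_assoc] using horth k l p hp

/-- Sparsity of the Jacobi operator for multiplication by y = ρ(z) sin θ on the spherical cap: the coupling integral vanishes unless h = 1 − i, j ∈ {k−1, k+1} and |m − n| ≤ 1. -/
theorem sphericalCap_jacobiY_sparse (α a : ℝ) (hα : α ∈ Set.Ioo (-1 : ℝ) 1) (ha : 0 ≤ a)
    (R : ℕ → ℕ → Polynomial ℝ)
    (hdeg : ∀ k l : ℕ, (R k l).degree = l)
    (horth : ∀ (k l : ℕ) (p : Polynomial ℝ), p.degree < (l : WithBot ℕ) →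
      ∫ x in α..1, (R k l).eval x * p.eval x * (x - α) ^ a * (1 - x ^ 2) ^ k = 0)
    (n k i m j h : ℕ) (hkn : k ≤ n) (hjm : j ≤ m)
    (hi : i ≤ 1) (hi0 : k = 0 → i = 0) (hh : h ≤ 1) (hh0 : j = 0 → h = 0)
    (hcond : h ≠ 1 - i ∨ ((j : ℤ) ≠ (k : ℤ) - 1 ∧ (j : ℤ) ≠ (k : ℤ) + 1) ∨ 2 ≤ |(m : ℤ) - (n : ℤ)|) :
    ∫ z in α..1, ∫ θ in (0:ℝ)..(2 * π),
      Real.sqrt (1 - z ^ 2) * Real.sin θ *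
      ((R k (n - k)).eval z * (1 - z ^ 2) ^ ((k : ℝ) / 2) * circY k i θ) *
      ((R j (m - j)).eval z * (1 - z ^ 2) ^ ((j : ℝ) / 2) * circY j h θ) *
      (z - α) ^ a = 0 := by
  have hcap : Set.uIcc α 1 ⊆ Set.Icc (-1) 1 := by
    simpa only [Set.uIcc_of_le hα.2.le] using Set.Icc_subset_Icc_left hα.1.le
  exact sphericalCap_jacobiY_sparse_general hcap
    (isZonalFamily_cap (by linarith) (fun k l ↦ (hdeg k l).le) horth) hkn hjm hi hi0 hh hh0 hcond
end

section
/- Let α ∈ (−1,1) and a ≥ 0 be real. Suppose that for each nonnegative integer k, (R_{k,l})_{l≥0} is a sequence of real polynomials with deg R_{k,l} = l and ∫_α^1 R_{k,l}(z) p(z) (z−α)^a (1−z²)^k dz = 0 for every polynomial p with deg p < l. Define Q_{n,k,i}(θ,z) := R_{k,n−k}(z) · (1−z²)^{k/2} · Y_{k,i}(θ). Then for index triples (n,k,i) and (m,j,h) (with 0 ≤ k ≤ n, 0 ≤ j ≤ m and admissible i, h), if h ≠ i, or j ≠ k, or |m − n| ≥ 2, one has ∫_α^1 ∫_0^{2π}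 z · Q_{n,k,i}(θ,z) · Q_{m,j,h}(θ,z) · (z−α)^a dθ dz = 0. (This is the three-term recurrence for multiplication by z on the spherical cap: different Fourier modes do not interact.) -/
open MeasureTheory Real Polynomial

/-!
The integrand separates into a radial factor in `z` and an angular factor in `θ`. Up to a constant,
`circY k i` is the phase-shifted cosine `cos (k θ - i π / 2)`, so the angular factor integrates to
zero as soon as the frequencies differ, or they agree and the phases differ by a right angle.
If both `k` and `i` agree, the two factors `(1 - z²) ^ (k / 2)` combine into the weight for which
`R k` is orthogonal; multiplication by `z` raises the degree by one only, so orthogonality to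
lower degrees kills the radial integral once the degrees differ by at least two.
-/

theorem integral_cos_int_mul_add {m : ℤ} {φ : ℝ} (h : m ≠ 0 ∨ cos φ = 0) :
    ∫ θ in (0 : ℝ)..(2 * π), cos (m * θ + φ) = 0 := by
  obtain rfl | hm := eq_or_ne m 0
  · simp [h.resolve_left (not_not.2 rfl)]
  · have hperiod : sin (m * (2 * π) + φ) = sin φ := by
      rw [add_comm, sin_add_int_mul_two_pi]
    rw [intervalIntegral.integral_comp_mul_add (fun x ↦ cos x) (Int.cast_ne_zero.2 hm) φ,
      integral_cos, hperiod, mul_zero, zero_add, sub_self, smul_zero]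

theorem integral_cos_int_mul_sub_mul_cos_int_mul_sub {p q : ℤ} {φ ψ : ℝ} (hadd : p + q ≠ 0)
    (hsub : p ≠ q ∨ cos (φ - ψ) = 0) :
    ∫ θ in (0 : ℝ)..(2 * π), cos (p * θ - φ) * cos (q * θ - ψ) = 0 := by
  have hprod (θ : ℝ) : cos (p * θ - φ) * cos (q * θ - ψ) =
      (cos ((p - q : ℤ) * θ + (ψ - φ)) + cos ((p + q : ℤ) * θ + (-φ - ψ))) / 2 := by
    rw [eq_div_iff two_ne_zero, mul_comm, ← mul_assoc, two_mul_cos_mul_cos]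
    push_cast
    ring_nf
  have hdiff : ∫ θ in (0 : ℝ)..(2 * π), cos ((p - q : ℤ) * θ + (ψ - φ)) = 0 :=
    integral_cos_int_mul_add <| hsub.imp sub_ne_zero.2 fun h ↦ by rwa [← cos_neg, neg_sub]
  have hsum : ∫ θ in (0 : ℝ)..(2 * π), cos ((p + q : ℤ) * θ + (-φ - ψ)) = 0 :=
    integral_cos_int_mul_add (.inl hadd)
  simp_rw [hprod]
  rw [intervalIntegral.integral_div, intervalIntegral.integral_add, hdiff, hsum, add_zero, zero_div]
  all_goals exact Continuous.intervalIntegrable (by fun_prop) _ _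

theorem circY_eq_mul_cos {k i : ℕ} (hi : i ≤ 1) (hi0 : k = 0 → i = 0) (θ : ℝ) :
    circY k i θ = (if k = 0 then √2 / 2 else 1) * cos (k * θ - i * (π / 2)) := by
  obtain rfl | hk := eq_or_ne k 0
  · simp [circY, hi0 rfl]
  · interval_cases i <;> simp [circY, hk, cos_sub_pi_div_two]

theorem integral_circY_mul_circY_eq_zero {k i j h : ℕ} (hi : i ≤ 1) (hi0 : k = 0 → i = 0)
    (hh : h ≤ 1) (hh0 : j = 0 → h = 0) (hne : h ≠ i ∨ j ≠ k) :
    ∫ θ in (0 : ℝ)..(2 * π), circY k i θ * circY j h θ = 0 := by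
  have hphase (hhi : h ≠ i) : cos (i * (π / 2) - h * (π / 2)) = 0 := by
    interval_cases i <;> interval_cases h <;> first | exact absurd rfl hhi | simp
  have hcos : ∫ θ in (0 : ℝ)..(2 * π),
      cos ((k : ℤ) * θ - i * (π / 2)) * cos ((j : ℤ) * θ - h * (π / 2)) = 0 :=
    integral_cos_int_mul_sub_mul_cos_int_mul_sub (by lia) <|
      hne.symm.imp (fun hjk ↦ by exact_mod_cast hjk.symm) hphase
  simp only [Int.cast_natCast] at hcos
  simp_rw [circY_eq_mul_cos hi hi0, circY_eq_mul_cos hh hh0, mul_mul_mul_comm _ (cos _)]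
  rw [intervalIntegral.integral_const_mul, hcos, mul_zero]

theorem map_X_mul_mul_eq_zero_of_orthogonal {S M : Type*} [CommSemiring S] [Zero M]
    {L : S[X] → M} {P : ℕ → S[X]} (hdeg : ∀ l : ℕ, (P l).degree ≤ l)
    (horth : ∀ (l : ℕ) (p : S[X]), p.degree < l → L (P l * p) = 0)
    {l m : ℕ} (hlm : 2 ≤ |(m : ℤ) - l|) : L (X * P l * P m) = 0 := by
  wlog hle : l ≤ m generalizing l m
  · rw [mul_right_comm]
    exact this (by rwa [abs_sub_comm]) (by lia)
  have hlt : (X * P l).degree < (m : WithBot ℕ) :=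
    calc (X * P l).degree ≤ (1 + l : WithBot ℕ) := degree_mul_le_of_le degree_X_le (hdeg l)
      _ < m := by
        rw [abs_of_nonneg (by lia)] at hlm
        exact_mod_cast (by lia : 1 + l < m)
  rw [mul_comm]
  exact horth m _ hlt

/-- The factor of a spherical cap function that depends on the height `z`: a polynomial times
`ρ(z) ^ k`, with `ρ(z) ^ k` written `(1 - z²) ^ (k / 2)`. -/
noncomputable def capRadial (p : ℝ[X]) (k : ℕ) (z : ℝ) : ℝ :=
  p.eval z * (1 - z ^ 2) ^ ((k : ℝ) / 2)

theorem continuous_capRadial (p : ℝ[X]) (k : ℕ) : Continuous (capRadial p k) :=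
  p.continuous.mul <| Continuous.rpow_const (by fun_prop) fun _ ↦ .inr (by positivity)

theorem capRadial_mul_capRadial (p q : ℝ[X]) (k : ℕ) {z : ℝ} (hz : z ∈ Set.Icc (-1 : ℝ) 1) :
    capRadial p k z * capRadial q k z = (p * q).eval z * (1 - z ^ 2) ^ k := by
  have hnonneg : 0 ≤ 1 - z ^ 2 := sub_nonneg.2 (sq_le_one_iff_abs_le_one z |>.2 (abs_le.2 hz))
  rw [capRadial, capRadial, mul_mul_mul_comm, rpow_div_two_eq_sqrt _ hnonneg, rpow_natCast,
    ← mul_pow, mul_self_sqrt hnonneg, eval_mul]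

theorem integral_mul_capRadial_mul_capRadial_eq_zero {α β : ℝ} {w : ℝ → ℝ} {k : ℕ}
    {P : ℕ → ℝ[X]} (hα : α ∈ Set.Icc (-1 : ℝ) 1) (hβ : β ∈ Set.Icc (-1 : ℝ) 1)
    (hdeg : ∀ l : ℕ, (P l).degree ≤ l)
    (horth : ∀ (l : ℕ) (p : ℝ[X]), p.degree < l →
      ∫ z in α..β, (P l).eval z * p.eval z * w z * (1 - z ^ 2) ^ k = 0)
    {l m : ℕ} (hlm : 2 ≤ |(m : ℤ) - l|) :
    ∫ z in α..β, z * capRadial (P l) k z * capRadial (P m) k z * w z = 0 := by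
  have hpoly : ∫ z in α..β, (X * P l * P m).eval z * w z * (1 - z ^ 2) ^ k = 0 :=
    map_X_mul_mul_eq_zero_of_orthogonal
      (L := fun p ↦ ∫ z in α..β, p.eval z * w z * (1 - z ^ 2) ^ k) hdeg
      (by simpa only [eval_mul] using horth) hlm
  rw [← hpoly]
  refine intervalIntegral.integral_congr fun z hz ↦ ?_
  have hz' : z ∈ Set.Icc (-1 : ℝ) 1 := Set.uIcc_subset_Icc hα hβ hz
  simp only [mul_assoc z, capRadial_mul_capRadial _ _ _ hz', eval_mul, eval_X]
  ring

/-- The spherical cap function `Q(θ, z) = p(z) ρ(z) ^ k Y_{k,i}(θ)`; the function `Q_{n,k,i}` of the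
orthogonal basis is the case `p = R k (n - k)`. -/
noncomputable def capHarmonic (p : ℝ[X]) (k i : ℕ) (θ z : ℝ) : ℝ :=
  capRadial p k z * circY k i θ

theorem integral_mul_capHarmonic_mul_capHarmonic (p q : ℝ[X]) (k i j h : ℕ) (z c : ℝ) :
    ∫ θ in (0 : ℝ)..(2 * π), z * capHarmonic p k i θ z * capHarmonic q j h θ z * c =
      z * capRadial p k z * capRadial q j z * c *
        ∫ θ in (0 : ℝ)..(2 * π), circY k i θ * circY j h θ := by
  rw [← intervalIntegral.integral_const_mul]
  congr 1 with θ
  simp only [capHarmonic]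
  ring

theorem sphericalCap_jacobiZ_sparse_general {α β : ℝ} {w : ℝ → ℝ} {R : ℕ → ℕ → ℝ[X]}
    (hα : α ∈ Set.Icc (-1 : ℝ) 1) (hβ : β ∈ Set.Icc (-1 : ℝ) 1)
    (hw : IntervalIntegrable w volume α β) (hdeg : ∀ k l : ℕ, (R k l).degree ≤ l)
    (horth : ∀ (k l : ℕ) (p : ℝ[X]), p.degree < l →
      ∫ z in α..β, (R k l).eval z * p.eval z * w z * (1 - z ^ 2) ^ k = 0)
    {n k i m j h : ℕ} (hkn : k ≤ n) (hjm : j ≤ m)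
    (hi : i ≤ 1) (hi0 : k = 0 → i = 0) (hh : h ≤ 1) (hh0 : j = 0 → h = 0)
    (hcond : h ≠ i ∨ j ≠ k ∨ 2 ≤ |(m : ℤ) - n|) :
    IntervalIntegrable (fun z ↦ ∫ θ in (0 : ℝ)..(2 * π),
      z * capHarmonic (R k (n - k)) k i θ z * capHarmonic (R j (m - j)) j h θ z * w z)
      volume α β ∧
    ∫ z in α..β, ∫ θ in (0 : ℝ)..(2 * π),
      z * capHarmonic (R k (n - k)) k i θ z * capHarmonic (R j (m - j)) j h θ z * w z = 0 := by
  simp_rw [integral_mul_capHarmonic_mul_capHarmonic, intervalIntegral.integral_mul_const]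
  refine ⟨.mul_const (hw.continuousOn_mul <| Continuous.continuousOn <|
    (continuous_id.mul (continuous_capRadial _ k)).mul (continuous_capRadial _ j)) _,
    mul_eq_zero.2 ?_⟩
  by_cases hne : h ≠ i ∨ j ≠ k
  · exact .inr (integral_circY_mul_circY_eq_zero hi hi0 hh hh0 hne)
  · obtain ⟨rfl, rfl⟩ : h = i ∧ j = k := by simpa only [not_or, not_not] using hne
    have hmn : 2 ≤ |((m - j : ℕ) : ℤ) - (n - j : ℕ)| := by
      rw [Nat.cast_sub hjm, Nat.cast_sub hkn, sub_sub_sub_cancel_right]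
      simpa only [ne_eq, not_true_eq_false, false_or] using hcond
    exact .inl (integral_mul_capRadial_mul_capRadial_eq_zero hα hβ (hdeg j) (horth j) hmn)

/-- Sparsity of the Jacobi operator for multiplication by z on the spherical cap: different Fourier modes do not interact and the operator is tridiagonal in the degree. -/
theorem sphericalCap_jacobiZ_sparse (α a : ℝ) (hα : α ∈ Set.Ioo (-1 : ℝ) 1) (ha : 0 ≤ a)
    (R : ℕ → ℕ → Polynomial ℝ)
    (hdeg : ∀ k l : ℕ, (R k l).degree = l)
    (horth : ∀ (k l : ℕ) (p : Polynomial ℝ), p.degree < (l : WithBot ℕ) →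
      ∫ x in α..1, (R k l).eval x * p.eval x * (x - α) ^ a * (1 - x ^ 2) ^ k = 0)
    (n k i m j h : ℕ) (hkn : k ≤ n) (hjm : j ≤ m)
    (hi : i ≤ 1) (hi0 : k = 0 → i = 0) (hh : h ≤ 1) (hh0 : j = 0 → h = 0)
    (hcond : h ≠ i ∨ j ≠ k ∨ 2 ≤ |(m : ℤ) - (n : ℤ)|) :
    ∫ z in α..1, ∫ θ in (0:ℝ)..(2 * π),
      z *
      ((R k (n - k)).eval z * (1 - z ^ 2) ^ ((k : ℝ) / 2) * circY k i θ) *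
      ((R j (m - j)).eval z * (1 - z ^ 2) ^ ((j : ℝ) / 2) * circY j h θ) *
      (z - α) ^ a = 0 :=
  (sphericalCap_jacobiZ_sparse_general (Set.Ioo_subset_Icc_self hα) (by simp)
    (Continuous.intervalIntegrable (by fun_prop (disch := exact .inr ha)) _ _)
    (fun k l ↦ (hdeg k l).le) horth hkn hjm hi hi0 hh hh0 hcond).2
end

section
/- Fix α ∈ (−1,1), a real number a ≥ 1 and an integer k ≥ 0. Let R be a real polynomial of degree n that is orthogonal of degree n for the weight (x−α)^a (1−x²)^k on (α,1). Then for every real polynomial S with deg S ≤ n − 2, ∫_α^1 S(x) · [k x (x−α) R(x) − (x−α)(1−x²) R'(x) − a (1−x²) R(x)] · (x−α)^{a−1} (1−x²)^k dx = 0. (This is the sparsity of the weighted spherical derivative operator W_φ^{(a)}: the matrix taking coefficients of the weighted function to coefficients of ρ ∂/∂φ[(z−α)^a f] in the weighted parameter-(a−1) basis is block-diagonal with sub-block bandwidths (4,2).) -/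
open MeasureTheory Real Polynomial

/-!
With respect to the weights `(x - α) ^ (a - 1) * (1 - x ^ 2) ^ k` and
`(x - α) ^ a * (1 - x ^ 2) ^ k`, the operator `W_φ` has the formal adjoint
`S ↦ (1 - x ^ 2) S' - (k + 2) x S`: since `(x - α) ^ a * (1 - x ^ 2) ^ (k + 1)` vanishes at both
endpoints, integration by parts leaves no boundary term. The adjoint raises degrees by at most one,
hence sends polynomials of degree at most `n - 2` to polynomials of degree less than `n`, to which
`R` is orthogonal.
-/

/-- The weight `(x - α) ^ a * (1 - x ^ 2) ^ k` on the cap interval `(α, 1)`. Both exponents are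
real, so that singularities at the endpoints are allowed. -/
noncomputable def capWeight (α a k x : ℝ) : ℝ :=
  (x - α) ^ a * (1 - x ^ 2) ^ k

/-- The weighted spherical derivative operator `W_φ^{(a)}`, applied to a function `f` with
derivative `f'`. In the coordinate `x = cos φ`, with `ρ = sin φ`, it is determined by
`ρ ∂/∂φ [(x - α) ^ a * ρ ^ k * f] = (x - α) ^ (a - 1) * ρ ^ k * W_φ^{(a)} f`. -/
noncomputable def capWphi (α a k : ℝ) (f f' : ℝ → ℝ) (x : ℝ) : ℝ :=
  k * x * (x - α) * f x - (x - α) * (1 - x ^ 2) * f' x - a * (1 - x ^ 2) * f x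

/-- The formal adjoint of `capWphi α a k`, from the weight with parameter `a - 1` to the one with
parameter `a`. -/
noncomputable def capWphiAdjoint (k : ℝ) (S : ℝ[X]) : ℝ[X] :=
  (1 - X ^ 2) * derivative S - C (k + 2) * X * S

theorem degree_capWphiAdjoint_le (k : ℝ) (S : ℝ[X]) :
    (capWphiAdjoint k S).degree ≤ S.degree + 1 := by
  rcases eq_or_ne S 0 with rfl | hS
  · simp [capWphiAdjoint]
  have h_deriv : (derivative S).degree + 1 ≤ S.degree :=
    Nat.WithBot.add_one_le_of_lt (degree_derivative_lt hS)
  have h_quad : (1 - X ^ 2 : ℝ[X]).degree ≤ 1 + 1 := by compute_degree; norm_num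
  have h_lin : (C (k + 2) * X : ℝ[X]).degree ≤ 1 := degree_C_mul_X_le _
  refine (degree_sub_le _ _).trans (max_le ?_ ?_)
  · calc ((1 - X ^ 2) * derivative S).degree
        ≤ 1 + 1 + (derivative S).degree := (degree_mul_le _ _).trans (by gcongr)
      _ = (derivative S).degree + 1 + 1 := by ring
      _ ≤ S.degree + 1 := by gcongr
  · calc (C (k + 2) * X * S).degree
        ≤ 1 + S.degree := (degree_mul_le _ _).trans (by gcongr)
      _ = S.degree + 1 := add_comm _ _

theorem degree_capWphiAdjoint_lt {k : ℝ} {S : ℝ[X]} {n : ℕ} (hS : S.degree + 2 ≤ n) :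
    (capWphiAdjoint k S).degree < n := by
  rcases eq_or_ne S 0 with rfl | hS0
  · simp [capWphiAdjoint]
  refine (degree_capWphiAdjoint_le k S).trans_lt ?_
  rw [degree_eq_natDegree hS0] at hS ⊢
  exact_mod_cast hS

section Weight

variable {α a k x : ℝ}

theorem one_sub_sq_pos_of_mem_Ioo (hα : -1 ≤ α) (hx : x ∈ Set.Ioo α 1) : 0 < 1 - x ^ 2 := by
  nlinarith [hx.1, hx.2]

theorem capWeight_add_one_left (hx : α < x) :
    capWeight α (a + 1) k x = (x - α) * capWeight α a k x := by
  rw [capWeight, capWeight, rpow_add_one (sub_pos.2 hx).ne']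
  ring

theorem capWeight_add_one_right (hx : 1 - x ^ 2 ≠ 0) :
    capWeight α a (k + 1) x = (1 - x ^ 2) * capWeight α a k x := by
  rw [capWeight, capWeight, rpow_add_one hx]
  ring

theorem capWeight_left_endpoint (ha : a ≠ 0) : capWeight α a k α = 0 := by
  simp [capWeight, ha]

theorem capWeight_right_endpoint (hk : k ≠ 0) : capWeight α a k 1 = 0 := by
  simp [capWeight, hk]

theorem continuous_capWeight (ha : 0 ≤ a) (hk : 0 ≤ k) : Continuous (capWeight α a k) :=
  ((continuous_id.sub continuous_const).rpow_const fun _ => Or.inr ha).mul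
    ((continuous_const.sub (continuous_id.pow 2)).rpow_const fun _ => Or.inr hk)

theorem hasDerivAt_capWeight (hα : -1 ≤ α) (hx : x ∈ Set.Ioo α 1) :
    HasDerivAt (capWeight α a k)
      (a * capWeight α (a - 1) k x - 2 * k * x * capWeight α a (k - 1) x) x := by
  have h_left : HasDerivAt (fun y => (y - α) ^ a) (1 * a * (x - α) ^ (a - 1)) x :=
    ((hasDerivAt_id x).sub_const α).rpow_const (Or.inl (sub_pos.2 hx.1).ne')
  have h_right : HasDerivAt (fun y => (1 - y ^ 2) ^ k)
      (-(2 * x) * k * (1 - x ^ 2) ^ (k - 1)) x := by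
    have h_sq : HasDerivAt (fun y : ℝ => 1 - y ^ 2) (-(2 * x)) x := by
      simpa using (hasDerivAt_pow 2 x).const_sub 1
    exact h_sq.rpow_const (Or.inl (one_sub_sq_pos_of_mem_Ioo hα hx).ne')
  refine (h_left.mul h_right).congr_deriv ?_
  simp only [capWeight]
  ring

theorem intervalIntegrable_sub_rpow {r : ℝ} (hr : -1 < r) (c b₁ b₂ : ℝ) :
    IntervalIntegrable (fun x => (x - c) ^ r) volume b₁ b₂ := by
  simpa using (intervalIntegral.intervalIntegrable_rpow' hr
    (a := b₁ - c) (b := b₂ - c)).comp_sub_right c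

theorem intervalIntegrable_one_sub_sq_rpow (hα : α ∈ Set.Ioo (-1) 1) (hk : -1 < k) :
    IntervalIntegrable (fun x => (1 - x ^ 2) ^ k) volume α 1 := by
  have h_sub : IntervalIntegrable (fun x : ℝ => (1 - x) ^ k) volume α 1 := by
    simpa using (intervalIntegral.intervalIntegrable_rpow' hk
      (a := 1 - α) (b := 0)).comp_sub_left 1
  have h_add : ContinuousOn (fun x : ℝ => (1 + x) ^ k) (Set.uIcc α 1) := by
    rw [Set.uIcc_of_le hα.2.le]
    exact (continuousOn_const.add continuousOn_id).rpow_const fun x hx =>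
      Or.inl ((by linarith [hx.1, hα.1] : 0 < 1 + x).ne')
  refine (h_sub.mul_continuousOn h_add).congr_uIoo fun x hx => ?_
  rw [Set.uIoo_of_le hα.2.le] at hx
  simp only
  rw [← mul_rpow (by linarith [hx.2]) (by linarith [hx.1, hα.1])]
  ring_nf

theorem intervalIntegrable_capWeight (hα : α ∈ Set.Ioo (-1) 1) (ha : -1 < a) (hk : -1 < k) :
    IntervalIntegrable (capWeight α a k) volume α 1 := by
  -- On either side of an interior point only one of the two factors can be singular.
  obtain ⟨m, hαm, hm1⟩ := exists_between hα.2
  have h_left : IntervalIntegrable (capWeight α a k) volume α m := by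
    refine (intervalIntegrable_sub_rpow ha α α m).mul_continuousOn ?_
    rw [Set.uIcc_of_le hαm.le]
    refine ContinuousOn.rpow_const (by fun_prop) fun x hx => Or.inl ?_
    nlinarith [hx.1, hx.2, hα.1]
  have h_right : IntervalIntegrable (capWeight α a k) volume m 1 := by
    refine (intervalIntegrable_one_sub_sq_rpow ⟨hα.1.trans hαm, hm1⟩ hk).continuousOn_mul ?_
    rw [Set.uIcc_of_le hm1.le]
    exact ContinuousOn.rpow_const (by fun_prop) fun x hx =>
      Or.inl (sub_pos.2 (hαm.trans_le hx.1)).ne'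
  exact h_left.trans h_right

end Weight

section Adjoint

variable {α a k : ℝ} {f f' : ℝ → ℝ}

theorem intervalIntegrable_deriv_capWeight (hα : α ∈ Set.Ioo (-1) 1) (ha : 0 < a) (hk : 0 < k) :
    IntervalIntegrable
      (fun x => a * capWeight α (a - 1) k x - 2 * k * x * capWeight α a (k - 1) x)
      volume α 1 :=
  ((intervalIntegrable_capWeight hα (by linarith) (by linarith)).const_mul a).sub
    ((intervalIntegrable_capWeight hα (by linarith) (by linarith)).continuousOn_mul (by fun_prop))

theorem integral_deriv_mul_capWeight_eq_zero (hα : α ∈ Set.Ioo (-1) 1) (ha : 0 < a) (hk : 0 < k)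
    (hf : ContinuousOn f (Set.Icc α 1)) (hff' : ∀ x ∈ Set.Ioo α 1, HasDerivAt f (f' x) x)
    (hf' : IntervalIntegrable f' volume α 1) :
    ∫ x in α..1, (f' x * capWeight α a k x +
      f x * (a * capWeight α (a - 1) k x - 2 * k * x * capWeight α a (k - 1) x)) = 0 := by
  rw [← Set.uIcc_of_le hα.2.le] at hf
  rw [intervalIntegral.integral_deriv_mul_eq_sub_of_hasDerivAt hf
    (continuous_capWeight ha.le hk.le).continuousOn
    (by simpa only [min_eq_left hα.2.le, max_eq_right hα.2.le] using hff')
    (by simpa only [min_eq_left hα.2.le, max_eq_right hα.2.le] using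
      fun x hx => hasDerivAt_capWeight hα.1.le hx)
    hf' (intervalIntegrable_deriv_capWeight hα ha hk),
    capWeight_left_endpoint ha.ne', capWeight_right_endpoint hk.ne']
  ring

/-- The subtracted expression is the derivative of `S * f * capWeight α a (k + 1)` when `f'` is the
derivative of `f`. -/
theorem mul_capWphi_mul_capWeight_eq {x : ℝ} (hα : -1 ≤ α) (hx : x ∈ Set.Ioo α 1) (S : ℝ[X]) :
    S.eval x * capWphi α a k f f' x * capWeight α (a - 1) k x =
      f x * (capWphiAdjoint k S).eval x * capWeight α a k x -
        (((derivative S).eval x * f x + S.eval x * f' x) * capWeight α a (k + 1) x +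
          S.eval x * f x * (a * capWeight α (a - 1) (k + 1) x -
            2 * (k + 1) * x * capWeight α a (k + 1 - 1) x)) := by
  have hx' : 1 - x ^ 2 ≠ 0 := (one_sub_sq_pos_of_mem_Ioo hα hx).ne'
  have h_left : capWeight α a k x = (x - α) * capWeight α (a - 1) k x := by
    simpa only [sub_add_cancel] using capWeight_add_one_left (a := a - 1) hx.1
  simp only [add_sub_cancel_right, capWeight_add_one_right hx', h_left, capWphi, capWphiAdjoint,
    eval_sub, eval_mul, eval_one, eval_pow, eval_X, eval_C]
  ring

theorem integral_mul_capWphi_eq_integral_mul_capWphiAdjoint (hα : α ∈ Set.Ioo (-1) 1)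
    (ha : 0 < a) (hk : -1 < k) (hf : ContinuousOn f (Set.Icc α 1))
    (hff' : ∀ x ∈ Set.Ioo α 1, HasDerivAt f (f' x) x) (hf' : IntervalIntegrable f' volume α 1)
    (S : ℝ[X]) :
    ∫ x in α..1, S.eval x * capWphi α a k f f' x * capWeight α (a - 1) k x =
      ∫ x in α..1, f x * (capWphiAdjoint k S).eval x * capWeight α a k x := by
  have hk' : 0 < k + 1 := by linarith
  have hf_uIcc : ContinuousOn f (Set.uIcc α 1) := by rwa [Set.uIcc_of_le hα.2.le]
  have hSf : ContinuousOn (fun x => S.eval x * f x) (Set.uIcc α 1) :=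
    S.continuousOn.mul hf_uIcc
  have hSf' : IntervalIntegrable (fun x => (derivative S).eval x * f x + S.eval x * f' x)
      volume α 1 :=
    ((derivative S).continuousOn.mul hf_uIcc).intervalIntegrable.add
      (hf'.continuousOn_mul S.continuousOn)
  have h_parts_integrable := (hSf'.mul_continuousOn
    (continuous_capWeight (α := α) ha.le hk'.le).continuousOn).add
    ((intervalIntegrable_deriv_capWeight hα ha hk').continuousOn_mul hSf)
  have h_adjoint_integrable : IntervalIntegrable
      (fun x => f x * (capWphiAdjoint k S).eval x * capWeight α a k x) volume α 1 :=
    (intervalIntegrable_capWeight hα (by linarith) hk).continuousOn_mul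
      (hf_uIcc.mul (capWphiAdjoint k S).continuousOn)
  rw [intervalIntegral.integral_congr_Ioo_of_le hα.2.le fun x hx =>
      mul_capWphi_mul_capWeight_eq hα.1.le hx S,
    intervalIntegral.integral_sub h_adjoint_integrable h_parts_integrable]
  exact sub_eq_self.2 <| integral_deriv_mul_capWeight_eq_zero hα ha hk' (S.continuousOn.mul hf)
    (fun x hx => (S.hasDerivAt x).mul (hff' x hx)) hSf'

end Adjoint

theorem sphericalCap_Wphi_sparse_general {α a k : ℝ} (hα : α ∈ Set.Ioo (-1) 1) (ha : 0 < a)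
    (hk : -1 < k) {n : ℕ} {R R' : ℝ → ℝ} (hR : ContinuousOn R (Set.Icc α 1))
    (hRR' : ∀ x ∈ Set.Ioo α 1, HasDerivAt R (R' x) x) (hR' : IntervalIntegrable R' volume α 1)
    (horth : ∀ p : ℝ[X], p.degree < n → ∫ x in α..1, R x * p.eval x * capWeight α a k x = 0)
    {S : ℝ[X]} (hS : S.degree + 2 ≤ n) :
    ∫ x in α..1, S.eval x * capWphi α a k R R' x * capWeight α (a - 1) k x = 0 := by
  rw [integral_mul_capWphi_eq_integral_mul_capWphiAdjoint hα ha hk hR hRR' hR' S]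
  exact horth _ (degree_capWphiAdjoint_lt hS)

/-- Sparsity of the weighted spherical derivative operator W_φ^{(a)}: the coupling of ρ ∂/∂φ[(z−α)^a f] against polynomials of degree at most n−2 in the parameter-(a−1) weight vanishes. -/
theorem sphericalCap_Wphi_sparse (α a : ℝ) (hα : α ∈ Set.Ioo (-1 : ℝ) 1) (ha : 1 ≤ a) (k n : ℕ)
    (R : Polynomial ℝ) (hdeg : R.degree = n)
    (horth : ∀ p : Polynomial ℝ, p.degree < (n : WithBot ℕ) →
      ∫ x in α..1, R.eval x * p.eval x * (x - α) ^ a * (1 - x ^ 2) ^ k = 0)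
    (S : Polynomial ℝ) (hS : S.degree + 2 ≤ (n : WithBot ℕ)) :
    ∫ x in α..1, S.eval x *
      ((k : ℝ) * x * (x - α) * R.eval x - (x - α) * (1 - x ^ 2) * (derivative R).eval x
        - a * (1 - x ^ 2) * R.eval x) *
      (x - α) ^ (a - 1) * (1 - x ^ 2) ^ k = 0 := by
  have hk : (-1 : ℝ) < k := by linarith [k.cast_nonneg (α := ℝ)]
  simpa only [capWeight, capWphi, rpow_natCast, ← mul_assoc] using
    sphericalCap_Wphi_sparse_general hα (by linarith) hk R.continuousOn
      (fun x _ => R.hasDerivAt x) ((derivative R).continuous.intervalIntegrable _ _)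
      (by simpa only [capWeight, rpow_natCast, ← mul_assoc] using horth) hS
end
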